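/- arXiv:1707.07629 — 2 statements merged into one kernel-verified Lean document; each statement's English description precedes it below -/
import Mathlib

section
/- Let d be a positive integer and let X be an n×n integer matrix with det X = d or det X = −d. Then there exists exactly one n×n integer matrix H in left Hermite normal form with det H = d such that X = U·H for some n×n unimodular matrix U; consequently the L-equivalence classes of the LHNF matrices of determinant d form a partition of the set of all integer solutions of |det X| = d. -/
open Matrix

/-- An `n × n` integer matrix is unimodular if its determinant is `1` or `-1`. -/
def Unimodular {n : ℕ} (U : Matrix (Fin n) (Fin n) ℤ) : Prop :=
  U.det = 1 ∨ U.det = -1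

/-- A square integer matrix is in left Hermite normal form: it is lower triangular,
its diagonal entries are positive, and each entry below the diagonal is nonnegative
and smaller than the diagonal entry of its column. -/
def LHNF {n : ℕ} (H : Matrix (Fin n) (Fin n) ℤ) : Prop :=
  (∀ i j, i < j → H i j = 0) ∧
  (∀ i, 0 < H i i) ∧
  (∀ i j, j < i → 0 ≤ H i j ∧ H i j < H j j)

/-- Triangularity: coefficients of a lattice vector vanish where the tail vanishes. -/
lemma aux_tri {n : ℕ} (H : Matrix (Fin n) (Fin n) ℤ) (h0 : ∀ i j, i < j → H i j = 0)
    (hp : ∀ i, 0 < H i i) (c : Fin n → ℤ) (j : Fin n) (hv : ∀ k, j < k → (c ᵥ* H) k = 0) :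
    (∀ k, j < k → c k = 0) ∧ (c ᵥ* H) j = c j * H j j := by
  have key : ∀ k, (∀ l, k < l → c l = 0) → (c ᵥ* H) k = c k * H k k := by
    intro k hk
    simp only [Matrix.vecMul, dotProduct]
    rw [Finset.sum_eq_single k]
    · intro b _ hb
      rcases lt_or_gt_of_ne hb with h | h
      · rw [h0 b k h, mul_zero]
      · rw [hk b h, zero_mul]
    · simp
  have h1 : ∀ k, j < k → c k = 0 := by
    intro k
    induction k using WellFoundedGT.induction with
    | ind k ih =>
      intro hjk
      have := key k (fun l hl => ih l hl (hjk.trans hl))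
      rw [hv k hjk] at this
      rcases mul_eq_zero.mp this.symm with h | h
      · exact h
      · exact absurd h (hp k).ne'
  exact ⟨h1, key j h1⟩

lemma aux_diag {n : ℕ} (H H' W : Matrix (Fin n) (Fin n) ℤ) (h : LHNF H) (h' : LHNF H')
    (hW : H' = W * H) (i : Fin n) : H i i ∣ H' i i := by
  have hr : W i ᵥ* H = H' i := by rw [hW]; rfl
  have := (aux_tri H h.1 h.2.1 (W i) i (fun k hk => by rw [hr]; exact h'.1 i k hk)).2
  rw [hr] at this
  rw [this]; exact dvd_mul_left _ _

lemma aux_unique {n : ℕ} (H H' W W' : Matrix (Fin n) (Fin n) ℤ) (h : LHNF H) (h' : LHNF H')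
    (hW : H' = W * H) (hW' : H = W' * H') : H' = H := by
  have hd : ∀ i, H i i = H' i i := fun i =>
    Int.dvd_antisymm (h.2.1 i).le (h'.2.1 i).le (aux_diag H H' W h h' hW i)
      (aux_diag H' H W' h' h hW' i)
  ext i j
  have hr : W i ᵥ* H = H' i := by rw [hW]; rfl
  have hr1 : (1 : Matrix (Fin n) (Fin n) ℤ) i ᵥ* H = H i := by
    change ((1 : Matrix (Fin n) (Fin n) ℤ) * H) i = H i
    rw [one_mul]
  have hs : (W i - (1 : Matrix (Fin n) (Fin n) ℤ) i) ᵥ* H = H' i - H i := by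
    rw [Matrix.sub_vecMul, hr, hr1]
  induction j using WellFoundedGT.induction with
  | ind j ih =>
    rcases lt_trichotomy i j with hij | hij | hij
    · rw [h.1 i j hij, h'.1 i j hij]
    · subst hij; exact (hd i).symm
    · have := (aux_tri H h.1 h.2.1 _ j (fun k hk => by
        rw [hs]; simp [ih k hk])).2
      rw [hs] at this
      have hdv : H j j ∣ H' i j - H i j := by
        simp only [Pi.sub_apply] at this
        rw [this]; exact dvd_mul_left _ _
      have a := h.2.2 i j hij
      have b := h'.2.2 i j hij
      rw [← hd j] at b
      have := Int.eq_zero_of_abs_lt_dvd hdv (by rw [abs_lt]; omega)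
      omega

/-- Minimal pivots. -/
lemma aux_pivot {n : ℕ} (L : Submodule ℤ (Fin n → ℤ)) (d : ℤ) (hd : d ≠ 0)
    (hL : ∀ j, Pi.single j d ∈ L) (j : Fin n) :
    ∃ r ∈ L, (∀ k, j < k → r k = 0) ∧ 0 < r j ∧
      ∀ v ∈ L, (∀ k, j < k → v k = 0) → r j ∣ v j := by
  let S : Submodule ℤ (Fin n → ℤ) :=
    { carrier := {v | v ∈ L ∧ ∀ k, j < k → v k = 0}
      zero_mem' := ⟨L.zero_mem, fun _ _ => rfl⟩
      add_mem' := fun {a b} ha hb => ⟨L.add_mem ha.1 hb.1, fun k hk => by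
        simp [ha.2 k hk, hb.2 k hk]⟩
      smul_mem' := fun c a ha => ⟨L.smul_mem c ha.1, fun k hk => by simp [ha.2 k hk]⟩ }
  obtain ⟨a, ha⟩ := (IsPrincipalIdealRing.principal
    (Submodule.map (LinearMap.proj j : (Fin n → ℤ) →ₗ[ℤ] ℤ) S : Ideal ℤ)).principal
  have hdv : ∀ v ∈ L, (∀ k, j < k → v k = 0) → a ∣ v j := by
    intro v hv hk
    have : v j ∈ Submodule.map (LinearMap.proj j : (Fin n → ℤ) →ₗ[ℤ] ℤ) S :=
      ⟨v, ⟨hv, hk⟩, rfl⟩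
    rw [ha] at this
    exact Ideal.mem_span_singleton.mp this
  have hmem : a ∈ Submodule.map (LinearMap.proj j : (Fin n → ℤ) →ₗ[ℤ] ℤ) S := by
    rw [ha]; exact Submodule.mem_span_singleton_self a
  obtain ⟨r, ⟨hrL, hr0⟩, hra⟩ := hmem
  replace hra : r j = a := hra
  have ha0 : a ≠ 0 := by
    rintro rfl
    have := hdv _ (hL j) (fun k hk => by simp [hk.ne'])
    simp at this
    exact hd this
  rcases lt_or_gt_of_ne ha0 with h | h
  · refine ⟨-r, L.neg_mem hrL, fun k hk => by simp [hr0 k hk], by simp [hra, h], ?_⟩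
    intro v hv hk
    simpa [hra] using hdv v hv hk
  · exact ⟨r, hrL, hr0, by rw [hra]; exact h, by rw [hra]; exact hdv⟩

lemma aux_reduce {n : ℕ} (L : Submodule ℤ (Fin n → ℤ)) (r : Fin n → Fin n → ℤ)
    (hr : ∀ j, r j ∈ L) (h0 : ∀ j k, j < k → r j k = 0) (hp : ∀ j, 0 < r j j) (m : ℕ) :
    ∀ v ∈ L, ∃ w ∈ L, (∀ k : Fin n, m ≤ k → w k = v k) ∧
      ∀ k : Fin n, (k : ℕ) < m → 0 ≤ w k ∧ w k < r k k := by
  induction m with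
  | zero => exact fun v hv => ⟨v, hv, fun _ _ => rfl, fun k hk => absurd hk (by omega)⟩
  | succ m ih =>
    intro v hv
    by_cases hm : m < n
    · let p : Fin n := ⟨m, hm⟩
      obtain ⟨w, hw, h1, h2⟩ := ih (v - (v p / r p p) • r p)
        (L.sub_mem hv (L.smul_mem _ (hr p)))
      refine ⟨w, hw, fun k hk => ?_, fun k hk => ?_⟩
      · rw [h1 k (by omega)]
        have : p < k := by rw [Fin.lt_def]; exact hk
        simp [h0 p k this]
      · rcases Nat.lt_succ_iff_lt_or_eq.mp hk with h | h
        · exact h2 k h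
        · have hkp : k = p := Fin.ext h
          subst hkp
          rw [h1 p h.ge]
          have e : (v - (v p / r p p) • r p) p = v p % r p p := by
            simp [Int.emod_def, mul_comm]
          rw [e]
          exact ⟨Int.emod_nonneg _ (hp p).ne', Int.emod_lt_of_pos _ (hp p)⟩
    · obtain ⟨w, hw, h1, h2⟩ := ih v hv
      exact ⟨w, hw, fun k hk => h1 k (by omega), fun k _ => h2 k (by omega)⟩

lemma aux_span {n : ℕ} (L : Submodule ℤ (Fin n → ℤ)) (H : Matrix (Fin n) (Fin n) ℤ)
    (hr : ∀ j, H j ∈ L) (h0 : ∀ j k, j < k → H j k = 0)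
    (hdv : ∀ j, ∀ v ∈ L, (∀ k, j < k → v k = 0) → H j j ∣ v j) (m : ℕ) :
    ∀ v ∈ L, (∀ k : Fin n, m ≤ k → v k = 0) → ∃ c, c ᵥ* H = v := by
  induction m with
  | zero =>
    intro v _ h
    refine ⟨0, ?_⟩
    ext k
    simp [h k (Nat.zero_le _)]
  | succ m ih =>
    intro v hv h
    by_cases hm : m < n
    · let p : Fin n := ⟨m, hm⟩
      obtain ⟨q, hq⟩ := hdv p v hv (fun k hk => h k hk)
      obtain ⟨c, hc⟩ := ih (v - q • H p) (L.sub_mem hv (L.smul_mem _ (hr p))) (fun k hk => by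
        rcases Nat.eq_or_lt_of_le hk with e | e
        · have hkp : k = p := Fin.ext e.symm
          subst hkp
          simp [hq, mul_comm]
        · have : p < k := e
          simp [h0 p k this, h k e])
      refine ⟨c + Pi.single p q, ?_⟩
      rw [Matrix.add_vecMul, hc, Matrix.single_vecMul]
      ext k
      simp [Matrix.row]
    · exact ih v hv (fun k hk => absurd k.2 (by omega))

lemma aux_exists {n : ℕ} (X : Matrix (Fin n) (Fin n) ℤ) (hX : X.det ≠ 0) :
    ∃ H U V : Matrix (Fin n) (Fin n) ℤ, LHNF H ∧ X = U * H ∧ H = V * X := by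
  let L : Submodule ℤ (Fin n → ℤ) := LinearMap.range X.vecMulLinear
  have hL : ∀ v, v ∈ L ↔ ∃ c, c ᵥ* X = v := fun v => Iff.rfl
  have hs : ∀ j, Pi.single j X.det ∈ L := by
    intro j
    rw [hL]
    refine ⟨X.adjugate j, ?_⟩
    change (X.adjugate * X) j = _
    rw [Matrix.adjugate_mul]
    ext k
    simp [Matrix.one_apply, Pi.single_apply, eq_comm]
  choose r hr h0 hp hdv using aux_pivot L X.det hX hs
  have := fun j : Fin n => aux_reduce L r hr h0 hp j (r j) (hr j)
  choose H hH h1 h2 using this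
  have hdiag : ∀ j, H j j = r j j := fun j => h1 j j le_rfl
  have hz : ∀ i j, i < j → H i j = 0 := fun i j hij => by
    rw [h1 i j (le_of_lt hij), h0 i j hij]
  have hrow : ∀ i, ∃ c, c ᵥ* (Matrix.of H) = X i := fun i =>
    aux_span L (Matrix.of H) hH hz
      (fun j v hv hk => by simpa [hdiag j] using hdv j v hv hk) n (X i)
      ((hL _).2 ⟨Pi.single i 1, by rw [Matrix.single_one_vecMul]; rfl⟩)
      (fun k hk => absurd k.2 (by omega))
  choose U hU using hrow
  choose V hV using fun i => (hL _).1 (hH i)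
  refine ⟨Matrix.of H, Matrix.of U, Matrix.of V, ⟨hz, fun i => ?_, fun i j hij => ?_⟩, ?_, ?_⟩
  · simpa [hdiag i] using hp i
  · simpa [hdiag j] using h2 i j hij
  · exact funext fun i => (hU i).symm
  · exact funext fun i => (hV i).symm

lemma aux_det_pos {n : ℕ} (H : Matrix (Fin n) (Fin n) ℤ) (h : LHNF H) : 0 < H.det := by
  rw [Matrix.det_of_isLowerTriangular H (fun i j hij => h.1 i j hij)]
  exact Finset.prod_pos fun i _ => h.2.1 i

lemma aux_inv {n : ℕ} (U : Matrix (Fin n) (Fin n) ℤ) (hU : Unimodular U) :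
    ∃ V, V * U = 1 :=
  ⟨U⁻¹, Matrix.nonsing_inv_mul U (Int.isUnit_iff.2 hU)⟩

/-- Every integer matrix `X` with `det X = ±d` is L-equivalent to exactly one matrix
in left Hermite normal form with determinant `d`; hence the L-equivalence classes of
the LHNF matrices of determinant `d` partition the set of solutions of `|det X| = d`. -/
theorem stmt_9 {n : ℕ} (d : ℤ) (hd : 0 < d) (X : Matrix (Fin n) (Fin n) ℤ)
    (hX : X.det = d ∨ X.det = -d) :
    ∃! H : Matrix (Fin n) (Fin n) ℤ,
      LHNF H ∧ H.det = d ∧ ∃ U : Matrix (Fin n) (Fin n) ℤ, Unimodular U ∧ X = U * H := by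
  have hX0 : X.det ≠ 0 := by rcases hX with h | h <;> omega
  obtain ⟨H, U, V, hH, hU, hV⟩ := aux_exists X hX0
  have hUu : Unimodular U := by
    have e : X.det = U.det * V.det * X.det := by
      conv_lhs => rw [hU, hV]
      simp only [Matrix.det_mul, mul_assoc]
    have e1 : U.det * V.det = 1 := by
      have : (U.det * V.det - 1) * X.det = 0 := by linear_combination -e
      rcases mul_eq_zero.mp this with h | h
      · omega
      · exact absurd h hX0
    exact Int.isUnit_iff.1 (IsUnit.of_mul_eq_one _ e1)
  have hdet : H.det = d := by
    have hpos := aux_det_pos H hH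
    have e : X.det = U.det * H.det := by rw [← Matrix.det_mul, ← hU]
    rcases hUu with h | h <;> rw [h] at e <;> rcases hX with h' | h' <;> omega
  refine ⟨H, ⟨hH, hdet, U, hUu, hU⟩, ?_⟩
  rintro H' ⟨hH', -, U', hU', hX'⟩
  obtain ⟨W, hW⟩ := aux_inv U hUu
  obtain ⟨W', hW'⟩ := aux_inv U' hU'
  refine aux_unique H H' (W' * U) (W * U') hH hH' ?_ ?_
  · rw [Matrix.mul_assoc, ← hU, hX', ← Matrix.mul_assoc, hW', Matrix.one_mul]
  · rw [Matrix.mul_assoc, ← hX', hU, ← Matrix.mul_assoc, hW, Matrix.one_mul]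
end

section
/- Let A be an r×n integer matrix of rank r with 0 < r < n, let g be the greatest divisor of A, and let d be a positive integer divisible by g. Set k = n − r. Then the number of L-A-equivalence classes of solutions of |det [A;X]| = d equals g^k multiplied by the number of k×k integer matrices in left Hermite normal form with determinant d/g. -/
open Matrix

/-- The greatest divisor of an `r × c` integer matrix: the greatest common divisor of
the determinants of all `r × r` submatrices obtained by selecting `r` of the `c`
columns. -/
def greatestDivisor {r c : ℕ} (M : Matrix (Fin r) (Fin c) ℤ) : ℤ :=
  Finset.univ.gcd fun f : Fin r → Fin c => (M.submatrix id f).det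

/-- The matrix `[A; X]` obtained by stacking `A` above `X`. -/
def stack {r k n : ℕ} (A : Matrix (Fin r) (Fin n) ℤ) (X : Matrix (Fin k) (Fin n) ℤ) :
    Matrix (Fin (r + k)) (Fin n) ℤ :=
  (Matrix.fromRows A X).submatrix finSumFinEquiv.symm id

/-- `X` is a solution of `|det [A; X]| = d`. -/
def IsSolution {r k : ℕ} (A : Matrix (Fin r) (Fin (r + k)) ℤ) (d : ℤ)
    (X : Matrix (Fin k) (Fin (r + k)) ℤ) : Prop :=
  (stack A X).det = d ∨ (stack A X).det = -d

/-- Two solutions `X`, `X'` are L-A-equivalent if `[A; X] = U · [A; X']` for some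
unimodular `U`. -/
def LAEquiv {r k : ℕ} (A : Matrix (Fin r) (Fin (r + k)) ℤ)
    (X X' : Matrix (Fin k) (Fin (r + k)) ℤ) : Prop :=
  ∃ U : Matrix (Fin (r + k)) (Fin (r + k)) ℤ, Unimodular U ∧ stack A X = U * stack A X'

lemma column_clear {ι : Type*} [Fintype ι] [DecidableEq ι] (s : Finset ι) (p : ι) (hp : p ∈ s) :
    ∀ (N : ℕ) (z : ι → ℤ), (∑ i ∈ s, (z i).natAbs = N) →
    ∃ S : Matrix ι ι ℤ, IsUnit S.det ∧ (∀ w : ι → ℤ, (∀ i ∈ s, w i = 0) → S *ᵥ w = w) ∧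
      ∀ i ∈ s, i ≠ p → (S *ᵥ z) i = 0 := by
  intro N
  induction N using Nat.strong_induction_on with
  | _ N ih =>
  intro z hz
  by_cases h : ∃ i ∈ s, ∃ j ∈ s, i ≠ j ∧ z j ≠ 0 ∧ (z j).natAbs ≤ (z i).natAbs
  · obtain ⟨i, hi, j, hj, hij, hj0, hle⟩ := h
    have happ : ∀ w : ι → ℤ, transvection i j (-(z i / z j)) *ᵥ w
        = Function.update w i (w i - (z i / z j) * w j) := by
      intro w
      ext a
      rw [transvection, Matrix.add_mulVec, Matrix.one_mulVec, Matrix.single_mulVec]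
      by_cases ha : a = i
      · subst ha; simp; ring
      · simp [ha]
    have hlt : ∑ a ∈ s, ((transvection i j (-(z i / z j)) *ᵥ z) a).natAbs < N := by
      rw [← hz]
      apply Finset.sum_lt_sum
      · intro a ha
        rw [happ]
        by_cases hai : a = i
        · subst hai
          simp only [Function.update_self]
          have h1 := Int.emod_def (z a) (z j)
          have h2 := Int.emod_nonneg (z a) hj0
          have h3 := Int.emod_lt_abs (z a) hj0
          rw [Int.abs_eq_natAbs] at h3
          rw [mul_comm (z a / z j), ← h1]
          omega
        · simp [hai]
      · refine ⟨i, hi, ?_⟩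
        rw [happ]
        simp only [Function.update_self]
        have h1 := Int.emod_def (z i) (z j)
        have h2 := Int.emod_nonneg (z i) hj0
        have h3 := Int.emod_lt_abs (z i) hj0
        rw [Int.abs_eq_natAbs] at h3
        rw [mul_comm (z i / z j), ← h1]
        omega
    obtain ⟨S, hS1, hS2, hS3⟩ := ih _ hlt _ rfl
    refine ⟨S * transvection i j (-(z i / z j)), ?_, ?_, ?_⟩
    · rw [Matrix.det_mul, Matrix.det_transvection_of_ne i j hij, mul_one]; exact hS1
    · intro w hw
      rw [← Matrix.mulVec_mulVec, happ, hw i hi, hw j hj]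
      have : Function.update w i (0 - z i / z j * 0) = w := by
        ext a; by_cases ha : a = i
        · subst ha; simp [hw a hi]
        · simp [ha]
      rw [this, hS2 w hw]
    · intro a ha hap
      rw [← Matrix.mulVec_mulVec]
      exact hS3 a ha hap
  · push Not at h
    -- at most one nonzero entry
    have huniq : ∀ i ∈ s, ∀ j ∈ s, i ≠ j → z j ≠ 0 → z i = 0 := by
      intro i hi j hj hij hj0
      by_contra hi0
      have h1 := h i hi j hj hij hj0
      have h2 := h j hj i hi hij.symm hi0
      omega
    by_cases hq : ∃ q ∈ s, q ≠ p ∧ z q ≠ 0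
    · obtain ⟨q, hq, hqp, hq0⟩ := hq
      have happ : ∀ w : ι → ℤ, ((Equiv.swap p q).permMatrix ℤ) *ᵥ w = w ∘ Equiv.swap p q := by
        intro w; rw [Matrix.permMatrix_mulVec]
      refine ⟨(Equiv.swap p q).permMatrix ℤ, ?_, ?_, ?_⟩
      · rw [Matrix.det_permutation, Equiv.Perm.sign_swap hqp.symm]; simp
      · intro w hw
        rw [happ]; ext a
        simp only [Function.comp]
        by_cases h1 : a = p
        · subst h1; simp [hw _ hp, hw _ hq]
        by_cases h2 : a = q
        · subst h2; simp [hw _ hp, hw _ hq]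
        rw [Equiv.swap_apply_of_ne_of_ne h1 h2]
      · intro a ha hap
        rw [happ]
        simp only [Function.comp]
        by_cases h2 : a = q
        · subst h2; simp; exact huniq _ hp _ hq (Ne.symm hqp) hq0
        rw [Equiv.swap_apply_of_ne_of_ne hap h2]
        exact huniq _ ha _ hq h2 hq0
    · push Not at hq
      exact ⟨1, by simp, by simp, by simpa using hq⟩

lemma mul_col {ι κ m : Type*} [Fintype κ] (S : Matrix ι κ ℤ) (M : Matrix κ m ℤ) (i : ι) (j : m) :
    (S * M) i j = (S *ᵥ (fun a => M a j)) i := rfl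

lemma triangularize {ι : Type*} [Fintype ι] [DecidableEq ι] {m : ℕ} (M : Matrix ι (Fin m) ℤ)
    (e : Fin m → ι) (he : Function.Injective e) :
    ∃ S : Matrix ι ι ℤ, IsUnit S.det ∧ ∀ j i, (∀ j' ≤ j, i ≠ e j') → (S * M) i j = 0 := by
  have key : ∀ t : ℕ, t ≤ m → ∃ S : Matrix ι ι ℤ, IsUnit S.det ∧
      ∀ j : Fin m, j.val < t → ∀ i, (∀ j' ≤ j, i ≠ e j') → (S * M) i j = 0 := by
    intro t
    induction t with
    | zero => intro _; exact ⟨1, by simp, by simp⟩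
    | succ t ih =>
      intro ht
      obtain ⟨S, hS, hSM⟩ := ih (by omega)
      let jt : Fin m := ⟨t, by omega⟩
      obtain ⟨T, hT1, hT2, hT3⟩ := column_clear
        (Finset.univ.filter fun i => ∀ j' < jt, i ≠ e j') (e jt)
        (by
          simp only [Finset.mem_filter, Finset.mem_univ, true_and]
          intro j' hj' h
          exact hj'.ne (he h).symm) _ (fun a => (S * M) a jt) rfl
      refine ⟨T * S, ?_, ?_⟩
      · rw [Matrix.det_mul]; exact hT1.mul hS
      · intro j hj i hi
        rw [Matrix.mul_assoc, mul_col]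
        by_cases hjt : j = jt
        · subst hjt
          apply hT3
          · simp only [Finset.mem_filter, Finset.mem_univ, true_and]
            intro j' hj'
            exact hi j' hj'.le
          · exact hi _ le_rfl
        · have hlt : j.val < t := by
            have : j.val ≠ t := fun h => hjt (Fin.ext h)
            omega
          rw [hT2]
          · exact hSM j hlt i hi
          · intro a ha
            simp only [Finset.mem_filter, Finset.mem_univ, true_and] at ha
            apply hSM j hlt
            intro j' hj'
            exact ha j' (lt_of_le_of_lt hj' hlt)
  obtain ⟨S, hS, h⟩ := key m le_rfl
  exact ⟨S, hS, fun j i => h j j.2 i⟩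

lemma exists_lower {n : ℕ} (M : Matrix (Fin n) (Fin n) ℤ) :
    ∃ S : Matrix (Fin n) (Fin n) ℤ, IsUnit S.det ∧ ∀ i j, i < j → (S * M) i j = 0 := by
  obtain ⟨S, hS, h⟩ := triangularize (M.submatrix id Fin.rev) Fin.rev Fin.rev_injective
  refine ⟨S, hS, fun i j hij => ?_⟩
  have := h (Fin.rev j) i (by
    rintro j' hj' rfl
    have := Fin.rev_le_rev.mpr hj'
    rw [Fin.rev_rev] at this
    exact absurd hij (not_lt.mpr this))
  rw [mul_col] at this ⊢
  simpa using this

lemma det_lower {n : ℕ} (M : Matrix (Fin n) (Fin n) ℤ) (h : ∀ i j, i < j → M i j = 0) :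
    M.det = ∏ i, M i i :=
  Matrix.det_of_isLowerTriangular M (fun i j hij => h i j hij)

lemma reduce_row {n : ℕ} (H : Matrix (Fin n) (Fin n) ℤ) (hH : ∀ i j, i < j → H i j = 0)
    (hpos : ∀ i, 0 < H i i) (t : ℕ) (ht : t ≤ n) : ∀ v : Fin n → ℤ,
    ∃ c : Fin n → ℤ, (∀ j, t ≤ j.val → c j = 0) ∧
      ∀ j, j.val < t → 0 ≤ (v + c ᵥ* H) j ∧ (v + c ᵥ* H) j < H j j := by
  induction t with
  | zero => intro v; exact ⟨0, by simp, by simp⟩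
  | succ t ih =>
    intro v
    let jt : Fin n := ⟨t, by omega⟩
    let q := v jt / H jt jt
    obtain ⟨c, hc1, hc2⟩ := ih (by omega) (v + (Pi.single jt (-q)) ᵥ* H)
    refine ⟨Pi.single jt (-q) + c, ?_, ?_⟩
    · intro j hj
      have : j ≠ jt := by
        rintro rfl
        simp [jt] at hj
      simp [this, hc1 j (by omega)]
    · intro j hj
      rw [Matrix.add_vecMul, ← add_assoc]
      by_cases hjt : j = jt
      · have hcz : (c ᵥ* H) j = 0 := by
          rw [Matrix.vecMul, dotProduct]
          apply Finset.sum_eq_zero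
          intro l _
          by_cases hl : t ≤ l.val
          · rw [hc1 l hl, zero_mul]
          · rw [hH l j (by rw [hjt]; exact not_le.mp hl), mul_zero]
        rw [Pi.add_apply, hcz, add_zero, hjt]
        have e1 : (v + Pi.single jt (-q) ᵥ* H) jt = v jt % H jt jt := by
          rw [Int.emod_def]
          simp [q]
          ring
        rw [e1]
        exact ⟨Int.emod_nonneg _ (hpos jt).ne', Int.emod_lt_of_pos _ (hpos jt)⟩
      · have hlt : j.val < t := by
          have : j.val ≠ t := fun h => hjt (Fin.ext h)
          omega
        exact hc2 j hlt

lemma exists_LHNF {n : ℕ} (M : Matrix (Fin n) (Fin n) ℤ) (hM : M.det ≠ 0) :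
    ∃ S : Matrix (Fin n) (Fin n) ℤ, IsUnit S.det ∧ LHNF (S * M) := by
  obtain ⟨S, hS, hlow⟩ := exists_lower M
  have hdet : (S * M).det ≠ 0 := by
    rw [Matrix.det_mul]; exact mul_ne_zero hS.ne_zero hM
  rw [det_lower _ hlow, Finset.prod_ne_zero_iff] at hdet
  -- fix signs
  let D : Matrix (Fin n) (Fin n) ℤ := Matrix.diagonal fun i => ((S * M) i i).sign
  have hD : IsUnit D.det := by
    rw [Matrix.det_diagonal]
    apply IsUnit.prod_univ_iff.mpr
    intro i
    rcases lt_or_gt_of_ne (hdet i (Finset.mem_univ _)) with h | h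
    · rw [Int.sign_eq_neg_one_of_neg h]; simp
    · rw [Int.sign_eq_one_of_pos h]; simp
  let H := D * (S * M)
  have hHl : ∀ i j, i < j → H i j = 0 := by
    intro i j hij
    simp only [H, D, Matrix.diagonal_mul, hlow i j hij, mul_zero]
  have hHp : ∀ i, 0 < H i i := by
    intro i
    simp only [H, D, Matrix.diagonal_mul, Int.sign_mul_self_eq_abs]
    exact abs_pos.mpr (hdet i (Finset.mem_univ _))
  choose C hC1 hC2 using fun i : Fin n => reduce_row H hHl hHp i.val i.2.le (H i)
  let C' : Matrix (Fin n) (Fin n) ℤ := C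
  have hC : ∀ i j : Fin n, i ≤ j → C' i j = 0 := fun i j hij => hC1 i j hij
  have hdet1 : (1 + C').det = 1 := by
    rw [det_lower]
    · apply Finset.prod_eq_one
      intro i _
      simp [hC i i le_rfl]
    · intro i j hij
      simp [hij.ne, hC i j hij.le]
  have hdiag : ∀ i j, i ≤ j → (C' * H) i j = 0 := by
    intro i j hij
    rw [Matrix.mul_apply]
    apply Finset.sum_eq_zero
    intro l _
    by_cases hl : i ≤ l
    · rw [hC i l hl, zero_mul]
    · rw [hHl l j (lt_of_lt_of_le (not_le.mp hl) hij), mul_zero]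
  refine ⟨(1 + C') * (D * S), ?_, ?_⟩
  · rw [Matrix.det_mul, Matrix.det_mul, hdet1, one_mul]; exact hD.mul hS
  · have e : (1 + C') * (D * S) * M = H + C' * H := by
      simp only [H, Matrix.mul_assoc, Matrix.add_mul, Matrix.one_mul]
    rw [e]
    refine ⟨?_, ?_, ?_⟩
    · intro i j hij
      rw [Matrix.add_apply, hHl i j hij, hdiag i j hij.le, add_zero]
    · intro i
      rw [Matrix.add_apply, hdiag i i le_rfl, add_zero]; exact hHp i
    · intro i j hij
      have h := hC2 i j hij
      rw [Matrix.add_apply, Matrix.add_apply, hdiag j j le_rfl, add_zero]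
      exact h

lemma LHNF_det_pos {n : ℕ} {H : Matrix (Fin n) (Fin n) ℤ} (hH : LHNF H) : 0 < H.det := by
  rw [det_lower _ hH.1]; exact Finset.prod_pos fun i _ => hH.2.1 i

lemma LHNF_unique {n : ℕ} {H H' S : Matrix (Fin n) (Fin n) ℤ} (hH : LHNF H) (hH' : LHNF H')
    (hS : IsUnit S.det) (h : H = S * H') : S = 1 := by
  have hlow : ∀ i j, i < j → S i j = 0 := by
    intro i j
    induction j using WellFoundedGT.induction with
    | _ j ih =>
    intro hij
    have h1 := hH.1 i j hij
    rw [h, Matrix.mul_apply, Finset.sum_eq_single j] at h1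
    · exact (mul_eq_zero.mp h1).resolve_right (hH'.2.1 j).ne'
    · intro l _ hl
      rcases lt_or_gt_of_ne hl with hl | hl
      · rw [hH'.1 l j hl, mul_zero]
      · rw [ih l hl (hij.trans hl), zero_mul]
    · simp
  have hdiag : ∀ i, S i i = 1 := by
    intro i
    have h1 := hH.2.1 i
    rw [h, Matrix.mul_apply, Finset.sum_eq_single i] at h1
    · have hp : 0 < S i i := pos_of_mul_pos_left h1 (hH'.2.1 i).le
      rw [det_lower _ hlow, IsUnit.prod_univ_iff] at hS
      rcases Int.isUnit_iff.mp (hS i) with h2 | h2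
      · exact h2
      · omega
    · intro l _ hl
      rcases lt_or_gt_of_ne hl with hl | hl
      · rw [hH'.1 l i hl, mul_zero]
      · rw [hlow i l hl, zero_mul]
    · simp
  have hHdiag : ∀ i, H i i = H' i i := by
    intro i
    rw [h, Matrix.mul_apply, Finset.sum_eq_single i]
    · rw [hdiag, one_mul]
    · intro l _ hl
      rcases lt_or_gt_of_ne hl with hl | hl
      · rw [hH'.1 l i hl, mul_zero]
      · rw [hlow i l hl, zero_mul]
    · simp
  have hup : ∀ i j, j < i → S i j = 0 := by
    intro i j
    induction j using WellFoundedGT.induction with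
    | _ j ih =>
    intro hij
    have h1 : H i j = S i j * H' j j + S i i * H' i j := by
      conv_lhs => rw [h, Matrix.mul_apply]
      rw [Finset.sum_eq_add j i hij.ne]
      · intro l _ hl
        rcases lt_or_gt_of_ne hl.1 with hl1 | hl1
        · rw [hH'.1 l j hl1, mul_zero]
        · rcases lt_or_gt_of_ne hl.2 with hl2 | hl2
          · rw [ih l hl1 hl2, zero_mul]
          · rw [hlow i l hl2, zero_mul]
      · simp
      · simp
    rw [hdiag, one_mul] at h1
    have h2 := hH.2.2 i j hij
    have h3 := hH'.2.2 i j hij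
    rw [hHdiag j] at h2
    by_contra hne
    rcases lt_or_gt_of_ne hne with hl | hl
    · nlinarith
    · nlinarith
  ext i j
  rcases lt_trichotomy i j with hij | hij | hij
  · rw [hlow i j hij, Matrix.one_apply_ne hij.ne]
  · subst hij; rw [hdiag, Matrix.one_apply_eq]
  · rw [hup i j hij, Matrix.one_apply_ne hij.ne']

lemma vecMul_inj_of_det {n : ℕ} {M : Matrix (Fin n) (Fin n) ℤ} (hM : M.det ≠ 0)
    {v w : Fin n → ℤ} (h : v ᵥ* M = w ᵥ* M) : v = w := by
  rw [← sub_eq_zero]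
  apply Matrix.eq_zero_of_vecMul_eq_zero hM
  rw [Matrix.sub_vecMul, h, sub_self]

lemma card_quot {r : ℕ} (L : Matrix (Fin r) (Fin r) ℤ) (hL : L.det ≠ 0) :
    Nat.card ((Fin r → ℤ) ⧸ LinearMap.range L.vecMulLinear) = L.det.natAbs := by
  have hinj : Function.Injective L.vecMulLinear := by
    intro v w h
    exact vecMul_inj_of_det hL h
  rw [← Submodule.natAbs_det_equiv _ (LinearEquiv.ofInjective L.vecMulLinear hinj)]
  congr 1
  trans LinearMap.det (Matrix.toLin' Lᵀ)
  · congr 1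
    ext v i
    simp
  · rw [LinearMap.det_toLin', Matrix.det_transpose]

lemma dvd_det_mul {r : ℕ} {ι : Type*} [Fintype ι] (B : Matrix (Fin r) ι ℤ) (C : Matrix ι (Fin r) ℤ)
    (x : ℤ) (hx : ∀ f : Fin r → ι, x ∣ (B.submatrix id f).det) : x ∣ (B * C).det := by
  classical
  have h : (B * C).det = ∑ f : Fin r → ι, (∏ i, C (f i) i) * (B.submatrix id f).det := by
    rw [← Matrix.det_transpose]
    have e : (B * C)ᵀ = Matrix.of fun j => ∑ l, C l j • Bᵀ l := by
      ext j i
      simp [Matrix.mul_apply, Finset.sum_apply, mul_comm]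
    rw [e]
    have := MultilinearMap.map_sum
      (Matrix.detRowAlternating (n := Fin r) (R := ℤ)).toMultilinearMap
      (fun j (l : ι) => C l j • Bᵀ l)
    refine this.trans (Finset.sum_congr rfl fun f _ => ?_)
    refine (MultilinearMap.map_smul_univ _ (fun i => C (f i) i) (fun i => Bᵀ (f i))).trans ?_
    rw [smul_eq_mul]
    congr 1
    rw [← Matrix.det_transpose]
    rfl
  rw [h]
  exact Finset.dvd_sum fun f _ => (hx f).mul_left _

lemma exists_reduce {r k : ℕ} (A : Matrix (Fin r) (Fin (r + k)) ℤ) :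
    ∃ (V W : Matrix (Fin r ⊕ Fin k) (Fin r ⊕ Fin k) ℤ) (L : Matrix (Fin r) (Fin r) ℤ),
      V * W = 1 ∧ W * V = 1 ∧ A.submatrix id finSumFinEquiv * V = fromCols L 0 ∧
      (greatestDivisor A).toNat = L.det.natAbs ∧ 0 ≤ greatestDivisor A := by
  obtain ⟨S, hS, h⟩ := triangularize (A.submatrix id finSumFinEquiv)ᵀ
    (Sum.inl : Fin r → Fin r ⊕ Fin k) Sum.inl_injective
  have hV : IsUnit (Sᵀ).det := by rwa [Matrix.det_transpose]
  have e1 : A.submatrix id finSumFinEquiv * Sᵀ =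
      fromCols (A.submatrix id finSumFinEquiv * Sᵀ).toCols₁ 0 := by
    conv_lhs => rw [← fromCols_toCols (A.submatrix id finSumFinEquiv * Sᵀ)]
    congr 1
    ext i j
    have := h i (Sum.inr j) (by simp)
    rw [← Matrix.transpose_apply (S * _), Matrix.transpose_mul, Matrix.transpose_transpose] at this
    exact this
  have hVW : Sᵀ * (Sᵀ)⁻¹ = 1 := Matrix.mul_nonsing_inv _ hV
  have hWV : (Sᵀ)⁻¹ * Sᵀ = 1 := Matrix.nonsing_inv_mul _ hV
  have hnn : 0 ≤ greatestDivisor A := by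
    apply Int.nonneg_of_normalize_eq_self
    exact Finset.normalize_gcd
  refine ⟨Sᵀ, (Sᵀ)⁻¹, _, hVW, hWV, e1, ?_, hnn⟩
  set V := Sᵀ
  set L := (A.submatrix id finSumFinEquiv * V).toCols₁ with hL
  have hg : (greatestDivisor A).toNat = (greatestDivisor A).natAbs := by omega
  rw [hg]
  apply Nat.dvd_antisymm
  · rw [Int.natAbs_dvd_natAbs]
    have e2 : L = A.submatrix id finSumFinEquiv * V.toCols₁ := by
      ext i j; simp [hL, Matrix.mul_apply]
    rw [e2]
    apply dvd_det_mul
    intro f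
    exact Finset.gcd_dvd (f := fun f : Fin r → Fin (r + k) => (A.submatrix id f).det)
      (Finset.mem_univ (finSumFinEquiv ∘ f))
  · rw [Int.natAbs_dvd_natAbs]
    apply Finset.dvd_gcd
    intro f _
    have e2 : A.submatrix id finSumFinEquiv = L * (V⁻¹).toRows₁ := by
      have h1 : A.submatrix id finSumFinEquiv = (A.submatrix id finSumFinEquiv * V) * V⁻¹ := by
        rw [Matrix.mul_assoc, hVW, Matrix.mul_one]
      rw [h1, e1]
      conv_lhs => rw [← fromRows_toRows V⁻¹]
      rw [fromCols_mul_fromRows, Matrix.zero_mul, add_zero]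
    have e3 : A.submatrix id f = L * ((V⁻¹).toRows₁.submatrix id (finSumFinEquiv.symm ∘ f)) := by
      have := congrArg (fun M => M.submatrix id (finSumFinEquiv.symm ∘ f)) e2
      simp only [Matrix.submatrix_submatrix] at this
      convert! this using 2
      ext i; simp
    rw [e3, Matrix.det_mul]
    exact dvd_mul_right _ _

lemma stack_eq {r k : ℕ} (A : Matrix (Fin r) (Fin (r + k)) ℤ) (X : Matrix (Fin k) (Fin (r + k)) ℤ)
    (V W : Matrix (Fin r ⊕ Fin k) (Fin r ⊕ Fin k) ℤ) (hVW : V * W = 1)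
    (L : Matrix (Fin r) (Fin r) ℤ) (hA : A.submatrix id finSumFinEquiv * V = fromCols L 0)
    (Y : Matrix (Fin k) (Fin r) ℤ) (Z : Matrix (Fin k) (Fin k) ℤ)
    (hX : X.submatrix id finSumFinEquiv * V = fromCols Y Z) :
    (stack A X).submatrix finSumFinEquiv finSumFinEquiv = fromBlocks L 0 Y Z * W := by
  have e : (stack A X).submatrix finSumFinEquiv finSumFinEquiv =
      fromRows (A.submatrix id finSumFinEquiv) (X.submatrix id finSumFinEquiv) := by
    ext (i | i) j <;> simp [stack]
  rw [e, ← Matrix.mul_one (fromRows _ _), ← hVW, ← Matrix.mul_assoc, fromRows_mul, hA, hX,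
    fromRows_fromCols_eq_fromBlocks]

lemma det_stack {r k : ℕ} (A : Matrix (Fin r) (Fin (r + k)) ℤ) (X : Matrix (Fin k) (Fin (r + k)) ℤ)
    (V W : Matrix (Fin r ⊕ Fin k) (Fin r ⊕ Fin k) ℤ) (hVW : V * W = 1)
    (L : Matrix (Fin r) (Fin r) ℤ) (hA : A.submatrix id finSumFinEquiv * V = fromCols L 0)
    (Y : Matrix (Fin k) (Fin r) ℤ) (Z : Matrix (Fin k) (Fin k) ℤ)
    (hX : X.submatrix id finSumFinEquiv * V = fromCols Y Z) :
    (stack A X).det.natAbs = L.det.natAbs * Z.det.natAbs := by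
  rw [← Matrix.det_submatrix_equiv_self finSumFinEquiv, stack_eq A X V W hVW L hA Y Z hX,
    Matrix.det_mul, Matrix.det_fromBlocks_zero₁₂, Int.natAbs_mul, Int.natAbs_mul]
  have : IsUnit W.det := by
    have h := congrArg Matrix.det hVW
    rw [Matrix.det_mul, Matrix.det_one, mul_comm] at h
    exact IsUnit.of_mul_eq_one _ h
  rw [Int.isUnit_iff_natAbs_eq.mp this, mul_one]

lemma LAEquiv_iff {r k : ℕ} (A : Matrix (Fin r) (Fin (r + k)) ℤ)
    (X X' : Matrix (Fin k) (Fin (r + k)) ℤ)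
    (V W : Matrix (Fin r ⊕ Fin k) (Fin r ⊕ Fin k) ℤ) (hVW : V * W = 1) (hWV : W * V = 1)
    (L : Matrix (Fin r) (Fin r) ℤ) (hA : A.submatrix id finSumFinEquiv * V = fromCols L 0)
    (Y Y' : Matrix (Fin k) (Fin r) ℤ) (Z Z' : Matrix (Fin k) (Fin k) ℤ)
    (hX : X.submatrix id finSumFinEquiv * V = fromCols Y Z)
    (hX' : X'.submatrix id finSumFinEquiv * V = fromCols Y' Z')
    (hL : L.det ≠ 0) (hZ' : Z'.det ≠ 0) :
    LAEquiv A X X' ↔ ∃ (R : Matrix (Fin k) (Fin r) ℤ) (S : Matrix (Fin k) (Fin k) ℤ),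
      IsUnit S.det ∧ Y = R * L + S * Y' ∧ Z = S * Z' := by
  have cancelL : ∀ P P' : Matrix (Fin r) (Fin r) ℤ, P * L = P' * L → P = P' := by
    intro P P' h
    ext i j
    exact congrFun (vecMul_inj_of_det hL (congrFun h i)) j
  have cancelZ : ∀ P P' : Matrix (Fin r) (Fin k) ℤ, P * Z' = P' * Z' → P = P' := by
    intro P P' h
    ext i j
    exact congrFun (vecMul_inj_of_det hZ' (congrFun h i)) j
  have s := stack_eq A X V W hVW L hA Y Z hX
  have s' := stack_eq A X' V W hVW L hA Y' Z' hX'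
  constructor
  · rintro ⟨U, hU, h⟩
    have h2 := congrArg
      (fun M => M.submatrix (finSumFinEquiv : Fin r ⊕ Fin k ≃ _) (finSumFinEquiv : Fin r ⊕ Fin k ≃ _)) h
    rw [← Matrix.submatrix_mul_equiv _ _ _ (finSumFinEquiv : Fin r ⊕ Fin k ≃ _), s, s'] at h2
    have h3 := congrArg (fun M => M * V) h2
    simp only [Matrix.mul_assoc, hWV, Matrix.mul_one] at h3
    have hdU : IsUnit (U.submatrix (finSumFinEquiv : Fin r ⊕ Fin k ≃ _)
        (finSumFinEquiv : Fin r ⊕ Fin k ≃ _)).det := by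
      rw [Matrix.det_submatrix_equiv_self]; exact Int.isUnit_iff.mpr hU
    generalize U.submatrix (finSumFinEquiv : Fin r ⊕ Fin k ≃ _)
        (finSumFinEquiv : Fin r ⊕ Fin k ≃ _) = T at h3 hdU
    rw [← Matrix.fromBlocks_toBlocks T] at h3 hdU
    generalize T.toBlocks₁₁ = P at *
    generalize T.toBlocks₁₂ = Q at *
    generalize T.toBlocks₂₁ = R at *
    generalize T.toBlocks₂₂ = S at *
    rw [Matrix.fromBlocks_multiply, Matrix.fromBlocks_inj] at h3
    obtain ⟨a, b, c, e⟩ := h3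
    rw [Matrix.mul_zero, zero_add] at b e
    have hQ : Q = 0 := cancelZ _ _ (by rw [← b, Matrix.zero_mul])
    subst hQ
    rw [Matrix.zero_mul, add_zero] at a
    have hP : P = 1 := cancelL _ _ (by rw [← a, Matrix.one_mul])
    subst hP
    rw [Matrix.det_fromBlocks_zero₁₂, Matrix.det_one, one_mul] at hdU
    exact ⟨R, S, hdU, c, e⟩
  · rintro ⟨R, S, hS, rfl, rfl⟩
    refine ⟨(fromBlocks 1 0 R S).submatrix finSumFinEquiv.symm finSumFinEquiv.symm, ?_, ?_⟩
    · unfold Unimodular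
      rw [← Int.isUnit_iff, Matrix.det_submatrix_equiv_self, Matrix.det_fromBlocks_zero₁₂,
        Matrix.det_one, one_mul]
      exact hS
    · have inj : ∀ M N : Matrix (Fin (r + k)) (Fin (r + k)) ℤ,
          M.submatrix (finSumFinEquiv : Fin r ⊕ Fin k ≃ _) (finSumFinEquiv : Fin r ⊕ Fin k ≃ _) =
          N.submatrix (finSumFinEquiv : Fin r ⊕ Fin k ≃ _) (finSumFinEquiv : Fin r ⊕ Fin k ≃ _) →
          M = N := by
        intro M N h
        ext i j
        have := congrFun (congrFun h (finSumFinEquiv.symm i)) (finSumFinEquiv.symm j)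
        simpa using this
      apply inj
      rw [← Matrix.submatrix_mul_equiv _ _ _ (finSumFinEquiv : Fin r ⊕ Fin k ≃ _), s, s']
      rw [Matrix.submatrix_submatrix]
      simp only [Equiv.symm_comp_self, Matrix.submatrix_id_id]
      rw [← Matrix.mul_assoc, Matrix.fromBlocks_multiply]
      simp

lemma LAEquiv_equivalence {r k : ℕ} (A : Matrix (Fin r) (Fin (r + k)) ℤ) :
    Equivalence (LAEquiv (k := k) A) := by
  refine ⟨fun X => ⟨1, by simp [Unimodular], by simp⟩, ?_, ?_⟩
  · rintro X Y ⟨U, hU, h⟩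
    have hu : IsUnit U.det := Int.isUnit_iff.mpr hU
    refine ⟨U⁻¹, Int.isUnit_iff.mp (Matrix.isUnit_nonsing_inv_det U hu), ?_⟩
    rw [h, ← Matrix.mul_assoc, Matrix.nonsing_inv_mul U hu, Matrix.one_mul]
  · rintro X Y Z ⟨U, hU, h⟩ ⟨T, hT, h'⟩
    refine ⟨U * T, Int.isUnit_iff.mp ?_, by rw [h, h', Matrix.mul_assoc]⟩
    rw [Matrix.det_mul]
    exact (Int.isUnit_iff.mpr hU).mul (Int.isUnit_iff.mpr hT)

/-- With `g` the greatest divisor of `A` and `k = n − r`, the number of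
L-A-equivalence classes of solutions of `|det [A; X]| = d` is `g ^ k` times the
number of `k × k` integer matrices in left Hermite normal form with determinant
`d / g`. -/
theorem stmt_19 {r k : ℕ} (hr : 0 < r) (hk : 0 < k)
    (A : Matrix (Fin r) (Fin (r + k)) ℤ) (hrank : A.rank = r)
    (d : ℤ) (hd : 0 < d) (hdvd : greatestDivisor A ∣ d) :
    Nat.card (Quot fun (X Y : {X : Matrix (Fin k) (Fin (r + k)) ℤ // IsSolution A d X}) =>
        LAEquiv A X.1 Y.1) =
      (greatestDivisor A).toNat ^ k *
        Nat.card {H : Matrix (Fin k) (Fin k) ℤ // LHNF H ∧ H.det = d / greatestDivisor A} := by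
  obtain ⟨V, W, L, hVW, hWV, hA, hg, hg0⟩ := exists_reduce A
  set g := greatestDivisor A with hgdef
  have hgne : g ≠ 0 := by
    intro h
    rw [h, zero_dvd_iff] at hdvd
    omega
  have hgpos : 0 < g := lt_of_le_of_ne hg0 hgne.symm
  have hL : L.det ≠ 0 := by
    intro h
    rw [h] at hg
    simp at hg
    omega
  obtain ⟨e, rfl⟩ := hdvd
  rw [Int.mul_ediv_cancel_left _ hgne]
  have he : 0 < e := pos_of_mul_pos_right hd hg0
  have hsol : ∀ (X : Matrix (Fin k) (Fin (r + k)) ℤ) (Y : Matrix (Fin k) (Fin r) ℤ)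
      (Z : Matrix (Fin k) (Fin k) ℤ), X.submatrix id finSumFinEquiv * V = fromCols Y Z →
      (IsSolution A (g * e) X ↔ Z.det.natAbs = e.natAbs) := by
    intro X Y Z hX
    unfold IsSolution
    rw [← Int.natAbs_eq_natAbs_iff, det_stack A X V W hVW L hA Y Z hX, ← hg, Int.natAbs_mul]
    have h1 : g.toNat = g.natAbs := by omega
    rw [h1]
    exact Nat.mul_right_inj (by omega)
  let G : Matrix (Fin k) (Fin r) ℤ → Matrix (Fin k) (Fin k) ℤ → Matrix (Fin k) (Fin (r + k)) ℤ :=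
    fun Y Z => (fromCols Y Z * W).submatrix id finSumFinEquiv.symm
  have hG : ∀ Y Z, (G Y Z).submatrix id finSumFinEquiv * V = fromCols Y Z := by
    intro Y Z
    simp only [G, Matrix.submatrix_submatrix, Function.comp_id, Equiv.symm_comp_self,
      Matrix.submatrix_id_id]
    rw [Matrix.mul_assoc, hWV, Matrix.mul_one]
  let Q := (Fin r → ℤ) ⧸ LinearMap.range L.vecMulLinear
  let Ψ : (Fin k → Q) × {H : Matrix (Fin k) (Fin k) ℤ // LHNF H ∧ H.det = e} →
      Quot fun (X Y : {X : Matrix (Fin k) (Fin (r + k)) ℤ // IsSolution A (g * e) X}) =>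
        LAEquiv A X.1 Y.1 := fun p =>
    Quot.mk _ ⟨G (Matrix.of fun i => (p.1 i).out) p.2.1, (hsol _ _ _ (hG _ _)).mpr (by rw [p.2.2.2])⟩
  have hΨ : Function.Bijective Ψ := by
    constructor
    · rintro ⟨q, H, hH, hHd⟩ ⟨q', H', hH', hHd'⟩ h
      have heq : Equivalence (fun (X Y : {X : Matrix (Fin k) (Fin (r + k)) ℤ //
          IsSolution A (g * e) X}) => LAEquiv A X.1 Y.1) :=
        (LAEquiv_equivalence A).comap Subtype.val
      have h1 := (heq.quot_mk_eq_iff _ _).mp h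
      replace h1 := (LAEquiv_iff A _ _ V W hVW hWV L hA _ _ _ _ (hG _ _) (hG _ _) hL
        (LHNF_det_pos hH').ne').mp h1
      obtain ⟨R, S, hS, hY, hZ⟩ := h1
      have hS1 := LHNF_unique hH hH' hS hZ
      subst hS1
      rw [Matrix.one_mul] at hY hZ
      subst hZ
      congr 1
      ext i
      rw [← Quotient.out_eq (q i), ← Quotient.out_eq (q' i)]
      refine (Submodule.Quotient.eq _).mpr ⟨R i, ?_⟩
      have := congrFun hY i
      rw [L.vecMulLinear_apply]
      have h2 : (q i).out = R i ᵥ* L + (q' i).out := this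
      rw [h2, add_sub_cancel_right]
    · intro x
      obtain ⟨⟨X, hX⟩, rfl⟩ := Quot.exists_rep x
      obtain ⟨Y, Z, hYZ⟩ : ∃ Y Z, X.submatrix id finSumFinEquiv * V = fromCols Y Z :=
        ⟨_, _, (fromCols_toCols _).symm⟩
      have hZ := (hsol X Y Z hYZ).mp hX
      have hZ0 : Z.det ≠ 0 := by omega
      obtain ⟨S, hS, hH⟩ := exists_LHNF Z hZ0
      have hHd : (S * Z).det = e := by
        have h1 := LHNF_det_pos hH
        have h2 : (S * Z).det.natAbs = e.natAbs := by
          rw [Matrix.det_mul, Int.natAbs_mul, Int.isUnit_iff_natAbs_eq.mp hS, one_mul, hZ]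
        omega
      refine ⟨(fun i => Submodule.Quotient.mk ((S * Y) i), ⟨S * Z, hH, hHd⟩), ?_⟩
      apply Quot.sound
      refine (LAEquiv_iff A _ _ V W hVW hWV L hA _ _ _ _ (hG _ _) hYZ hL hZ0).mpr ?_
      have hR : ∀ i, ∃ c : Fin r → ℤ, c ᵥ* L =
          (Submodule.Quotient.mk ((S * Y) i) : Q).out - (S * Y) i := by
        intro i
        have h1 : (Submodule.Quotient.mk ((Submodule.Quotient.mk ((S * Y) i) : Q).out) : Q) =
            Submodule.Quotient.mk ((S * Y) i) := Quotient.out_eq _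
        exact (Submodule.Quotient.eq _).mp h1
      choose R hR using hR
      refine ⟨Matrix.of R, S, hS, ?_, rfl⟩
      ext i j
      have h1 := congrFun (hR i) j
      have h2 : (Matrix.of R * L) i j = (R i ᵥ* L) j := rfl
      rw [Matrix.add_apply, h2, h1, Pi.sub_apply, sub_add_cancel]
      rfl
  rw [← Nat.card_congr (Equiv.ofBijective Ψ hΨ), Nat.card_prod, Nat.card_fun, card_quot L hL, hg,
    Nat.card_fin]
end
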